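/- For every n ≥ 4, a generic complex plane curve of degree n has no projective automorphisms other than the identity: the set of nonzero homogeneous polynomials Φ ∈ ℂ[x,y,z] of degree n which define a smooth plane curve and for which the identity is the only g ∈ PGL₃(ℂ) such that Φ ∘ ĝ is a nonzero scalar multiple of Φ (ĝ a linear lift of g), contains a subset that is open and dense in the space of all homogeneous polynomials of degree n in three variables, topologized by coefficients. -/

import Mathlib

open MvPolynomial
open scoped MatrixGroups

noncomputable section

/-- Substitution of a linear change of variables into a polynomial in three variables:
`Φ ↦ Φ ∘ M`. -/
def substMat (M : Matrix (Fin 3) (Fin 3) ℂ) :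
    MvPolynomial (Fin 3) ℂ →ₐ[ℂ] MvPolynomial (Fin 3) ℂ :=
  aeval fun i => ∑ j, C (M i j) * X j

/-- The projective linear group `PGL₃(ℂ)`. -/
abbrev PGL3 := GL (Fin 3) ℂ ⧸ Subgroup.center (GL (Fin 3) ℂ)

/-- `Φ` defines a smooth plane curve: the only common zero of the three partial
derivatives in `ℂ³` is the origin. -/
def SmoothCurve (Φ : MvPolynomial (Fin 3) ℂ) : Prop :=
  ∀ q : Fin 3 → ℂ, (∀ i, eval q (pderiv i Φ) = 0) → q = 0

/-- `g ∈ PGL₃(ℂ)` stabilizes the curve `Φ = 0`: for a (hence any) linear lift `glift ∈ GL₃(ℂ)`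
of `g`, the polynomial `Φ ∘ glift` is a nonzero scalar multiple of `Φ`. -/
def ProjStab (Φ : MvPolynomial (Fin 3) ℂ) (g : PGL3) : Prop :=
  ∃ glift : GL (Fin 3) ℂ, QuotientGroup.mk glift = g ∧ ∃ c : ℂ, c ≠ 0 ∧ substMat (↑glift) Φ = c • Φ

/-- The standard topology on polynomials, by coefficients.  On the (finite-dimensional)
space of homogeneous polynomials of a fixed degree this is the standard topology. -/
instance : TopologicalSpace (MvPolynomial (Fin 3) ℂ) :=
  TopologicalSpace.induced (fun Φ d => MvPolynomial.coeff d Φ) inferInstance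

/-!
Density is a dimension count. A form which is singular, or semi-invariant under a diagonalizable
nonscalar matrix, has more vanishing coefficients in suitable coordinates than the choice of these
coordinates has parameters. For the matrix this is because it multiplies monomials which differ by
exchanging variables with different eigenvalues by different factors, so that such monomials cannot
both occur. Hence these forms lie in finitely many images of polynomial maps from spaces of smaller
dimension.

The other elements of the stabilizer are controlled by compactness. If `Φ` is smooth, then
`‖grad Φ x‖` is comparable to `‖x‖ ^ (n - 1)`, and the chain rule for `Φ ∘ g = c • Φ` gives
`κ(g) ^ (n - 1) ≤ 9 B ^ 4 κ(g)` for the condition number `κ`, with `B` locally uniform in `Φ`. Since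
`n ≥ 3` this bounds `κ` on the stabilizer. The powers of a matrix with a nontrivial Jordan block
have unbounded condition numbers, so every element of the stabilizer is diagonalizable.

For openness, the scalar matrices are isolated in a uniform way: squaring a matrix close to the
scalars increases its relative distance from them by a fixed factor. Thus some power of every
nonscalar element of the stabilizer lies, up to scaling, in a fixed compact set of nonscalar
matrices, and having no symmetry in a compact set is an open condition.
-/

section Polynomials

variable {σ R : Type*} [CommRing R] {n : ℕ} {Φ : MvPolynomial σ R}

lemma eval_smul_of_isHomogeneous (h : Φ.IsHomogeneous n) (a : R) (x : σ → R) :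
    eval (a • x) Φ = a ^ n * eval x Φ := by
  rw [eval_eq, eval_eq, Finset.mul_sum]
  refine Finset.sum_congr rfl fun d hd => ?_
  rw [h.degree_eq_sum_deg_support hd]
  simp only [Pi.smul_apply, smul_eq_mul, mul_pow, Finset.prod_mul_distrib,
    Finset.prod_pow_eq_pow_sum]
  ring

lemma eval_piSingle_one_of_isHomogeneous [DecidableEq σ] (h : Φ.IsHomogeneous n) (i : σ) :
    eval (Pi.single i 1) Φ = coeff (Finsupp.single i n) Φ := by
  have monomial_eq {d : σ →₀ ℕ} (hd : d ∈ Φ.support) (hne : d ≠ Finsupp.single i n) :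
      ∃ k ∈ d.support, k ≠ i := by
    by_contra! hcon
    refine hne ?_
    obtain ⟨a, rfl⟩ : ∃ a, d = Finsupp.single i a :=
      Finsupp.support_subset_singleton'.mp fun k hk => Finset.mem_singleton.mpr (hcon k hk)
    rw [h.degree_eq_sum_deg_support hd, ← Finsupp.degree_apply, Finsupp.degree_single]
  rw [eval_eq, Finset.sum_eq_single (Finsupp.single i n)]
  · rw [Finset.prod_eq_one, mul_one]
    intro k hk
    simp [Finset.mem_singleton.mp (Finsupp.support_single_subset hk)]
  · intro d hd hne
    obtain ⟨k, hk, hki⟩ := monomial_eq hd hne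
    rw [Finset.prod_eq_zero hk, mul_zero]
    simp [hki, Finsupp.mem_support_iff.mp hk]
  · intro hd
    rw [notMem_support_iff.mp hd, zero_mul]

/-- The gradient of a polynomial at a point, as the vector of its partial derivatives. -/
def grad (Φ : MvPolynomial σ R) (x : σ → R) : σ → R := fun i => eval x (pderiv i Φ)

lemma grad_smul (c : R) (Φ : MvPolynomial σ R) (x : σ → R) : grad (c • Φ) x = c • grad Φ x := by
  ext i
  simp [grad]

lemma grad_smul_of_isHomogeneous (h : Φ.IsHomogeneous n) (a : R) (x : σ → R) :
    grad Φ (a • x) = a ^ (n - 1) • grad Φ x := by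
  ext i
  simp [grad, eval_smul_of_isHomogeneous h.pderiv]

lemma coeff_eq_zero_of_grad_eq_zero [DecidableEq σ] [NoZeroDivisors R] [CharZero R]
    (h : Φ.IsHomogeneous n) {i : σ} (h0 : grad Φ (Pi.single i 1) = 0) (j : σ) :
    coeff (Finsupp.single i (n - 1) + Finsupp.single j 1) Φ = 0 := by
  have h1 : coeff (Finsupp.single i (n - 1)) (pderiv j Φ) = 0 := by
    rw [← eval_piSingle_one_of_isHomogeneous h.pderiv]
    exact congrFun h0 j
  rw [coeff_pderiv] at h1
  exact (mul_eq_zero.mp h1).resolve_right (Nat.cast_add_one_ne_zero _)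

end Polynomials

section Substitution

variable (M N : Matrix (Fin 3) (Fin 3) ℂ) (Φ : MvPolynomial (Fin 3) ℂ)

lemma eval_substMat (x : Fin 3 → ℂ) : eval x (substMat M Φ) = eval (M.mulVec x) Φ := by
  rw [substMat, ← coe_aeval_eq_eval, RingHom.coe_coe, comp_aeval_apply, ← coe_aeval_eq_eval]
  simp only [map_sum, map_mul, aeval_X, aeval_C]
  rfl

lemma substMat_substMat : substMat M (substMat N Φ) = substMat (N * M) Φ :=
  MvPolynomial.funext fun x => by simp [eval_substMat, Matrix.mulVec_mulVec]

lemma substMat_one : substMat 1 Φ = Φ :=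
  MvPolynomial.funext fun x => by simp [eval_substMat]

variable {M N Φ} {n : ℕ}

lemma isHomogeneous_substMat (h : Φ.IsHomogeneous n) : (substMat M Φ).IsHomogeneous n := by
  rw [← one_mul n]
  exact h.aeval _ fun i => IsHomogeneous.sum _ _ 1 fun j _ => isHomogeneous_C_mul_X (M i j) j

lemma substMat_smul_of_isHomogeneous (h : Φ.IsHomogeneous n) (a : ℂ) :
    substMat (a • M) Φ = a ^ n • substMat M Φ :=
  MvPolynomial.funext fun x => by
    simp [eval_substMat, Matrix.smul_mulVec, eval_smul_of_isHomogeneous h]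

lemma substMat_injective (hM : M.det ≠ 0) : Function.Injective (substMat M) := by
  refine Function.LeftInverse.injective (g := substMat M⁻¹) fun Φ => ?_
  rw [substMat_substMat, Matrix.mul_nonsing_inv _ hM.isUnit, substMat_one]

variable (M Φ)

lemma pderiv_substMat (j : Fin 3) :
    pderiv j (substMat M Φ) = ∑ k, M k j • substMat M (pderiv k Φ) := by
  have pderiv_linear (i : Fin 3) : pderiv j (∑ k, C (M i k) * X k) = C (M i j) := by
    simp [pderiv_X, Pi.single_apply]
  induction Φ using MvPolynomial.induction_on with
  | C a => simp [substMat]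
  | add p q hp hq => simp [hp, hq, Finset.sum_add_distrib]
  | mul_X p i hp =>
    have substMat_X : substMat M (X i) = ∑ k, C (M i k) * X k := by simp [substMat]
    have pderiv_X_eq (k : Fin 3) :
        M k j • substMat M (p * pderiv k (X i)) = if i = k then M k j • substMat M p else 0 := by
      rw [pderiv_X, Pi.single_apply]
      split_ifs <;> simp
    rw [map_mul, pderiv_mul, hp, substMat_X, pderiv_linear]
    simp only [pderiv_mul, map_add, map_mul (substMat M) (pderiv _ p), smul_add,
      Finset.sum_add_distrib, pderiv_X_eq, substMat_X, ← smul_mul_assoc, ← Finset.sum_mul]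
    simp [smul_eq_C_mul, mul_comm]

lemma grad_substMat (x : Fin 3 → ℂ) :
    grad (substMat M Φ) x = M.transpose.mulVec (grad Φ (M.mulVec x)) := by
  ext j
  simp [grad, pderiv_substMat, eval_substMat, Matrix.mulVec, dotProduct]

lemma coeff_substMat_diagonal (D : Fin 3 → ℂ) (d : Fin 3 →₀ ℕ) :
    coeff d (substMat (Matrix.diagonal D) Φ) = (∏ i, D i ^ d i) * coeff d Φ := by
  induction Φ using MvPolynomial.induction_on' with
  | add p q hp hq => simp [hp, hq, mul_add]
  | monomial e a =>
    have substMat_monomial : substMat (Matrix.diagonal D) (monomial e a) =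
        monomial e ((∏ i, D i ^ e i) * a) :=
      MvPolynomial.funext fun x => by
        simp [eval_substMat, eval_monomial, Matrix.mulVec_diagonal, mul_pow,
          Finset.prod_mul_distrib, Finsupp.prod_fintype]
        ring
    rw [substMat_monomial, coeff_monomial, coeff_monomial]
    split_ifs with h
    · rw [h]
    · simp

end Substitution

section CoefficientSpace

variable {σ R : Type*} [CommRing R]

/-- The polynomial with prescribed coefficients on the finite set `S` of exponents and no other
monomials. -/
def ofCoeffs (S : Finset (σ →₀ ℕ)) (c : S → R) : MvPolynomial σ R :=
  ∑ d : S, monomial (d : σ →₀ ℕ) (c d)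

lemma coeff_ofCoeffs [DecidableEq σ] (S : Finset (σ →₀ ℕ)) (c : S → R) (d : σ →₀ ℕ) :
    coeff d (ofCoeffs S c) = if h : d ∈ S then c ⟨d, h⟩ else 0 := by
  simp only [ofCoeffs, coeff_sum, coeff_monomial]
  split_ifs with h
  · rw [Finset.sum_eq_single ⟨d, h⟩] <;> simp +contextual [Subtype.ext_iff]
  · exact Finset.sum_eq_zero fun e _ => if_neg (by rintro rfl; exact h e.2)

lemma ofCoeffs_coeff {S : Finset (σ →₀ ℕ)} {Φ : MvPolynomial σ R} (h : Φ.support ⊆ S) :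
    ofCoeffs S (fun d => coeff (d : σ →₀ ℕ) Φ) = Φ := by
  classical
  ext d
  rw [coeff_ofCoeffs]
  split_ifs with hd
  · rfl
  · exact (notMem_support_iff.mp fun hd' => hd (h hd')).symm

variable [Fintype σ] [DecidableEq σ]

/-- The exponents of the monomials of degree `n`. -/
def exponentsOfDegree (σ : Type*) [Fintype σ] [DecidableEq σ] (n : ℕ) : Finset (σ →₀ ℕ) :=
  Finset.univ.finsuppAntidiag n

lemma mem_exponentsOfDegree {n : ℕ} {d : σ →₀ ℕ} : d ∈ exponentsOfDegree σ n ↔ d.degree = n := by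
  simp [exponentsOfDegree, Finset.mem_finsuppAntidiag, Finsupp.degree_eq_sum]

lemma support_subset_exponentsOfDegree {n : ℕ} {Φ : MvPolynomial σ R} (h : Φ.IsHomogeneous n) :
    Φ.support ⊆ exponentsOfDegree σ n := fun _ hd =>
  mem_exponentsOfDegree.mpr (h.degree_eq_sum_deg_support hd).symm

lemma isHomogeneous_ofCoeffs (n : ℕ) (c : exponentsOfDegree σ n → R) :
    (ofCoeffs (exponentsOfDegree σ n) c).IsHomogeneous n :=
  IsHomogeneous.sum _ _ _ fun d _ => isHomogeneous_monomial _ (mem_exponentsOfDegree.mp d.2)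

end CoefficientSpace

section Smoothness

lemma dense_compl_iUnion_range {ι F : Type*} [Countable ι] {E : ι → Type*}
    [∀ i, NormedAddCommGroup (E i)] [∀ i, NormedSpace ℝ (E i)] [∀ i, FiniteDimensional ℝ (E i)]
    [NormedAddCommGroup F] [NormedSpace ℝ F] [FiniteDimensional ℝ F] {f : ∀ i, E i → F}
    (hf : ∀ i, ContDiff ℝ 1 (f i))
    (hdim : ∀ i, Module.finrank ℝ (E i) < Module.finrank ℝ F) :
    Dense (⋃ i, Set.range (f i))ᶜ := by
  rcases isEmpty_or_nonempty ι with _ | ⟨⟨i₀⟩⟩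
  · simp
  refine dense_compl_of_dimH_lt_finrank ?_
  rw [dimH_iUnion]
  calc ⨆ i, dimH (Set.range (f i))
      ≤ ((Module.finrank ℝ F - 1 : ℕ) : ENNReal) := iSup_le fun i =>
        (hf i).dimH_range_le.trans (Nat.cast_le.mpr (Nat.le_sub_one_of_lt (hdim i)))
    _ < Module.finrank ℝ F := Nat.cast_lt.mpr (Nat.sub_one_lt (hdim i₀).ne_bot)

variable {σ V : Type*} [NormedAddCommGroup V] [NormedSpace ℝ V]

/-- The families of polynomials, parametrized by `V`, all of whose coefficients are continuously
differentiable in the real sense. -/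
def smoothFamilies (σ V : Type*) [NormedAddCommGroup V] [NormedSpace ℝ V] :
    Subalgebra ℂ (V → MvPolynomial σ ℂ) where
  carrier := {F | ∀ d, ContDiff ℝ 1 fun v => coeff d (F v)}
  add_mem' hF hG d := by simpa using (hF d).add (hG d)
  mul_mem' hF hG d := by
    classical
    simp only [Pi.mul_apply, coeff_mul]
    exact ContDiff.sum fun a _ => (hF _).mul (hG _)
  algebraMap_mem' _ _ := contDiff_const

lemma const_mem_smoothFamilies (Φ : MvPolynomial σ ℂ) :
    (fun _ => Φ) ∈ smoothFamilies σ V := fun _ => contDiff_const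

lemma C_mem_smoothFamilies {f : V → ℂ} (hf : ContDiff ℝ 1 f) :
    (fun v => C (f v)) ∈ smoothFamilies σ V := by
  classical
  intro d
  simp only [coeff_C]
  split_ifs
  · exact hf
  · exact contDiff_const

lemma substMat_ofCoeffs_mem_smoothFamilies {M : V → Matrix (Fin 3) (Fin 3) ℂ}
    (hM : ∀ i j, ContDiff ℝ 1 fun v => M v i j) (S : Finset (Fin 3 →₀ ℕ)) {c : V → S → ℂ}
    (hc : ∀ d, ContDiff ℝ 1 fun v => c v d) :
    (fun v => substMat (M v) (ofCoeffs S (c v))) ∈ smoothFamilies (Fin 3) V := by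
  have expand : (fun v => substMat (M v) (ofCoeffs S (c v))) =
      ∑ d : S, (fun v => C (c v d)) *
        ∏ i ∈ (d : Fin 3 →₀ ℕ).support,
          (∑ j, (fun v => C (M v i j)) * fun _ => X j) ^ (d : Fin 3 →₀ ℕ) i := by
    ext1 v
    simp [ofCoeffs, substMat, bind₁_monomial]
  rw [expand]
  exact sum_mem fun d _ => mul_mem (C_mem_smoothFamilies (hc d)) <| prod_mem fun i _ =>
    pow_mem (sum_mem fun j _ => mul_mem (C_mem_smoothFamilies (hM i j))
      (const_mem_smoothFamilies _)) _

end Smoothness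

section Degenerate

/-- A form of degree `n` is degenerate if a linear change of coordinates `P` belonging to a family
with `T.card` free entries makes more than `T.card` of its coefficients vanish. -/
def IsDegenerate (n : ℕ) (Φ : MvPolynomial (Fin 3) ℂ) : Prop :=
  ∃ (T : Finset (Fin 3 × Fin 3)) (Z : Finset (Fin 3 →₀ ℕ)) (P : Matrix (Fin 3) (Fin 3) ℂ),
    T.card < Z.card ∧ P.det ≠ 0 ∧
    (∀ i j, (i, j) ∉ T → P i j = (1 : Matrix (Fin 3) (Fin 3) ℂ) i j) ∧
    Z ⊆ exponentsOfDegree (Fin 3) n ∧ ∀ d ∈ Z, coeff d (substMat P Φ) = 0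

/-- The matrix with prescribed entries at the positions in `T` and those of the identity matrix
elsewhere. -/
def matrixOfEntries (T : Finset (Fin 3 × Fin 3)) (t : T → ℂ) : Matrix (Fin 3) (Fin 3) ℂ :=
  fun i j => if h : (i, j) ∈ T then t ⟨(i, j), h⟩ else (1 : Matrix (Fin 3) (Fin 3) ℂ) i j

lemma contDiff_adjugate_matrixOfEntries (T : Finset (Fin 3 × Fin 3)) (i j : Fin 3) :
    ContDiff ℝ 1 fun t : T → ℂ => (matrixOfEntries T t).adjugate i j := by
  have hP (i j : Fin 3) : ContDiff ℝ 1 fun t : T → ℂ => matrixOfEntries T t i j := by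
    unfold matrixOfEntries
    split_ifs <;> fun_prop
  simp only [Matrix.adjugate_fin_three]
  fin_cases i <;> fin_cases j <;>
    simp only [Fin.isValue, Fin.zero_eta, Fin.mk_one, Fin.reduceFinMk, Matrix.of_apply,
      Matrix.cons_val', Matrix.cons_val, Matrix.cons_val_zero, Matrix.cons_val_one,
      Matrix.cons_val_fin_one] <;>
    fun_prop

/-- The coefficients of the forms that a change of coordinates with free entries in `T` carries to
a form without monomials in `Z`. The adjugate stands for the inverse, up to a factor which the
coefficients absorb, so that the parametrization is polynomial. -/
def degenerateCoeffs (n : ℕ) (T : Finset (Fin 3 × Fin 3)) (Z : Finset (Fin 3 →₀ ℕ))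
    (p : (↥(exponentsOfDegree (Fin 3) n \ Z) → ℂ) × (T → ℂ)) : exponentsOfDegree (Fin 3) n → ℂ :=
  fun d => coeff (d : Fin 3 →₀ ℕ) (substMat (matrixOfEntries T p.2).adjugate (ofCoeffs _ p.1))

lemma contDiff_degenerateCoeffs (n : ℕ) (T : Finset (Fin 3 × Fin 3)) (Z : Finset (Fin 3 →₀ ℕ)) :
    ContDiff ℝ 1 (degenerateCoeffs n T Z) :=
  contDiff_pi.mpr fun d => substMat_ofCoeffs_mem_smoothFamilies
    (fun i j => (contDiff_adjugate_matrixOfEntries T i j).comp contDiff_snd) _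
    (fun _ => by fun_prop) d

lemma IsDegenerate.mem_range_degenerateCoeffs {n : ℕ} {c : exponentsOfDegree (Fin 3) n → ℂ}
    (h : IsDegenerate n (ofCoeffs _ c)) :
    ∃ (T : Finset (Fin 3 × Fin 3)) (Z : Finset (Fin 3 →₀ ℕ)),
      T.card < Z.card ∧ Z ⊆ exponentsOfDegree (Fin 3) n ∧
        c ∈ Set.range (degenerateCoeffs n T Z) := by
  obtain ⟨T, Z, P, hcard, hP, hT, hZ, hcoeff⟩ := h
  set Φ := ofCoeffs _ c with hΦ
  have hom : Φ.IsHomogeneous n := isHomogeneous_ofCoeffs n c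
  set Ψ := (P.det ^ n)⁻¹ • substMat P Φ with hΨ
  have support_Ψ : Ψ.support ⊆ exponentsOfDegree (Fin 3) n \ Z := by
    refine support_smul.trans fun d hd => Finset.mem_sdiff.mpr
      ⟨support_subset_exponentsOfDegree (isHomogeneous_substMat hom) hd, fun hdZ => ?_⟩
    exact mem_support_iff.mp hd (hcoeff d hdZ)
  have hPT : matrixOfEntries T (fun t => P t.1.1 t.1.2) = P := by
    ext i j
    unfold matrixOfEntries
    split_ifs with h
    · rfl
    · exact (hT i j h).symm
  have substMat_adjugate : substMat P.adjugate Ψ = Φ := by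
    rw [hΨ, map_smul, substMat_substMat, Matrix.mul_adjugate, substMat_smul_of_isHomogeneous hom,
      substMat_one, smul_smul, inv_mul_cancel₀ (pow_ne_zero _ hP), one_smul]
  refine ⟨T, Z, hcard, hZ, (fun d => coeff d.1 Ψ, fun t => P t.1.1 t.1.2), funext fun d => ?_⟩
  simp only [degenerateCoeffs, hPT, ofCoeffs_coeff support_Ψ, substMat_adjugate]
  simp [hΦ, coeff_ofCoeffs]

lemma dense_setOf_not_isDegenerate (n : ℕ) :
    Dense {c : exponentsOfDegree (Fin 3) n → ℂ | ¬ IsDegenerate n (ofCoeffs _ c)} := by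
  let ι := {q : Finset (Fin 3 × Fin 3) × Finset (Fin 3 →₀ ℕ) //
    q.1.card < q.2.card ∧ q.2 ⊆ exponentsOfDegree (Fin 3) n}
  refine (dense_compl_iUnion_range (ι := ι) (f := fun q => degenerateCoeffs n q.1.1 q.1.2)
    (fun q => contDiff_degenerateCoeffs n _ _) fun ⟨⟨T, Z⟩, hcard, hZ⟩ => ?_).mono ?_
  · dsimp only at hcard hZ
    have := Finset.card_sdiff_add_card_eq_card hZ
    simp only [Module.finrank_prod, Module.finrank_pi_fintype, Complex.finrank_real_complex,
      Finset.sum_const, Finset.card_univ, Fintype.card_coe, smul_eq_mul]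
    omega
  · refine fun c hc hdeg => hc ?_
    obtain ⟨T, Z, hcard, hZ, hmem⟩ := hdeg.mem_range_degenerateCoeffs
    exact Set.mem_iUnion.mpr ⟨⟨(T, Z), hcard, hZ⟩, hmem⟩

lemma dense_of_forall_not_isDegenerate {n : ℕ} {s : Set (homogeneousSubmodule (Fin 3) ℂ n)}
    (hs : ∀ Φ : homogeneousSubmodule (Fin 3) ℂ n,
      ¬ IsDegenerate n (Φ : MvPolynomial (Fin 3) ℂ) → Φ ∈ s) : Dense s := by
  let F : (exponentsOfDegree (Fin 3) n → ℂ) → homogeneousSubmodule (Fin 3) ℂ n :=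
    fun c => ⟨ofCoeffs _ c, isHomogeneous_ofCoeffs n c⟩
  have hF : Continuous F := by
    refine Continuous.subtype_mk (continuous_induced_rng.mpr (continuous_pi fun d => ?_)) _
    simp only [Function.comp_apply, coeff_ofCoeffs]
    split_ifs <;> fun_prop
  have hsurj : Function.Surjective F := fun Φ =>
    ⟨_, Subtype.ext (ofCoeffs_coeff (support_subset_exponentsOfDegree Φ.2))⟩
  refine (hsurj.denseRange.dense_image hF (dense_setOf_not_isDegenerate n)).mono ?_
  rintro _ ⟨c, hc, rfl⟩
  exact hs _ hc

end Degenerate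

section SingularForms

lemma isDegenerate_of_not_smoothCurve {n : ℕ} (hn : n ≠ 0) {Φ : MvPolynomial (Fin 3) ℂ}
    (h : Φ.IsHomogeneous n) (hs : ¬ SmoothCurve Φ) : IsDegenerate n Φ := by
  obtain ⟨q, hq, hq0⟩ : ∃ q, (∀ i, eval q (pderiv i Φ) = 0) ∧ q ≠ 0 := by
    simpa [SmoothCurve] using hs
  obtain ⟨i, hi⟩ : ∃ i, q i ≠ 0 := Function.ne_iff.mp hq0
  set p := (q i)⁻¹ • q
  have hp : p i = 1 := inv_mul_cancel₀ hi
  have grad_q : grad Φ q = 0 := funext hq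
  have grad_p : grad Φ p = 0 := by rw [grad_smul_of_isHomogeneous h, grad_q, smul_zero]
  set P := (1 : Matrix (Fin 3) (Fin 3) ℂ).updateCol i p
  have P_mulVec : P.mulVec (Pi.single i 1) = p := by
    ext k
    simp [P]
  let z (j : Fin 3) : Fin 3 →₀ ℕ := Finsupp.single i (n - 1) + Finsupp.single j 1
  have hz : Function.Injective z := fun j k hjk =>
    Finsupp.single_left_injective one_ne_zero (add_left_cancel hjk)
  refine ⟨Finset.univ.erase i ×ˢ {i}, Finset.univ.image z, P, ?_, ?_, ?_, ?_, ?_⟩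
  · simp [Finset.card_image_of_injective _ hz]
  · rw [← Matrix.cramer_apply, Matrix.cramer_one]
    simp [hp]
  · intro a b hab
    simp only [P, Matrix.updateCol_apply]
    split_ifs with hb
    · obtain rfl : a = b := by simpa [hb] using hab
      simp [hb, hp]
    · rfl
  · refine Finset.image_subset_iff.mpr fun j _ => mem_exponentsOfDegree.mpr ?_
    rw [map_add, Finsupp.degree_single, Finsupp.degree_single]
    omega
  · simp only [Finset.mem_image, Finset.mem_univ, true_and, forall_exists_index,
      forall_apply_eq_imp_iff]
    refine coeff_eq_zero_of_grad_eq_zero (isHomogeneous_substMat h) ?_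
    rw [grad_substMat, P_mulVec, grad_p, Matrix.mulVec_zero]

end SingularForms

section DiagonalSymmetries

/-- Seven disjoint pairs of quartic monomials, listed by exponents. The two monomials in a pair are
obtained from a cubic monomial by multiplication with two different variables. In the first five
pairs these are the first two variables. -/
def monomialPairs : Fin 7 → (Fin 3 → ℕ) × Fin 3 × Fin 3 :=
  ![(![3, 0, 0], 0, 1), (![1, 2, 0], 0, 1), (![2, 0, 1], 0, 1), (![0, 2, 1], 0, 1),
    (![1, 0, 2], 0, 1), (![0, 1, 2], 1, 2), (![0, 0, 3], 0, 2)]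

/-- The exponents of the two quartic monomials in a pair of `monomialPairs`. -/
def pairExponents (k : Fin 7) : Finset (Fin 3 → ℕ) :=
  {(monomialPairs k).1 + Pi.single (monomialPairs k).2.1 1,
    (monomialPairs k).1 + Pi.single (monomialPairs k).2.2 1}

lemma pairwise_disjoint_pairExponents :
    Pairwise fun k l => Disjoint (pairExponents k) (pairExponents l) := by
  unfold Pairwise
  decide

lemma sum_eq_four_of_mem_pairExponents : ∀ k, ∀ v ∈ pairExponents k, ∑ i, v i = 4 := by
  decide

/-- The exponent of degree `n` obtained from a quartic exponent by permuting the variables and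
multiplying with a power of the last one. -/
def extendExponent (n : ℕ) (τ : Equiv.Perm (Fin 3)) (v : Fin 3 → ℕ) : Fin 3 →₀ ℕ :=
  (Finsupp.equivFunOnFinite.symm v).mapDomain τ + Finsupp.single (τ 2) (n - 4)

lemma extendExponent_injective (n : ℕ) (τ : Equiv.Perm (Fin 3)) :
    Function.Injective (extendExponent n τ) := fun _ _ h =>
  Finsupp.equivFunOnFinite.symm.injective
    (Finsupp.mapDomain_injective τ.injective (add_right_cancel h))

lemma extendExponent_add_single (n : ℕ) (τ : Equiv.Perm (Fin 3)) (v : Fin 3 → ℕ) (i : Fin 3) :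
    extendExponent n τ (v + Pi.single i 1) = extendExponent n τ v + Finsupp.single (τ i) 1 := by
  have : Finsupp.equivFunOnFinite.symm (v + Pi.single i 1) =
      Finsupp.equivFunOnFinite.symm v + Finsupp.single i 1 := by
    ext k
    simp [Finsupp.single_eq_pi_single]
  rw [extendExponent, extendExponent, this, Finsupp.mapDomain_add, Finsupp.mapDomain_single,
    add_right_comm]

lemma degree_extendExponent {n : ℕ} (hn : 4 ≤ n) (τ : Equiv.Perm (Fin 3)) {v : Fin 3 → ℕ}
    (hv : ∑ i, v i = 4) : (extendExponent n τ v).degree = n := by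
  rw [extendExponent, map_add, Finsupp.degree_mapDomain, Finsupp.degree_single,
    Finsupp.degree_eq_sum]
  simp [hv, hn]

lemma coeff_eq_zero_or_of_substMat_diagonal {D : Fin 3 → ℂ} (hD : ∀ i, D i ≠ 0)
    {Ψ : MvPolynomial (Fin 3) ℂ} {c : ℂ} (h : substMat (Matrix.diagonal D) Ψ = c • Ψ)
    {i j : Fin 3} (hij : D i ≠ D j) (w : Fin 3 →₀ ℕ) :
    coeff (w + Finsupp.single i 1) Ψ = 0 ∨ coeff (w + Finsupp.single j 1) Ψ = 0 := by
  have weight (i : Fin 3) (hi : coeff (w + Finsupp.single i 1) Ψ ≠ 0) :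
      (∏ k, D k ^ w k) * D i = c := by
    have := congrArg (coeff (w + Finsupp.single i 1)) h
    rw [coeff_substMat_diagonal, coeff_smul, smul_eq_mul] at this
    rw [← mul_right_cancel₀ hi this]
    simp only [Finsupp.add_apply, pow_add, Finset.prod_mul_distrib]
    simp [Finsupp.single_apply]
  by_contra! hne
  refine hij (mul_left_cancel₀ (Finset.prod_ne_zero_iff.mpr fun k _ => ?_)
    ((weight i hne.1).trans (weight j hne.2).symm))
  exact pow_ne_zero _ (hD k)

variable {n : ℕ} {Φ : MvPolynomial (Fin 3) ℂ} {c : ℂ} {P : Matrix (Fin 3) (Fin 3) ℂ}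
  {D : Fin 3 → ℂ}

lemma isDegenerate_of_substMat_diagonal (hn : 4 ≤ n) (hP : P.det ≠ 0) (hD : ∀ i, D i ≠ 0)
    (h : substMat (Matrix.diagonal D) (substMat P Φ) = c • substMat P Φ)
    {T : Finset (Fin 3 × Fin 3)}
    (hT : ∀ i j, (i, j) ∉ T → P i j = (1 : Matrix (Fin 3) (Fin 3) ℂ) i j)
    (τ : Equiv.Perm (Fin 3)) {K : Finset (Fin 7)} (hTK : T.card < K.card)
    (hK : ∀ k ∈ K, D (τ (monomialPairs k).2.1) ≠ D (τ (monomialPairs k).2.2)) :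
    IsDegenerate n Φ := by
  have vanishing : ∀ k : K, ∃ v ∈ pairExponents k,
      coeff (extendExponent n τ v) (substMat P Φ) = 0 := by
    intro k
    simp only [pairExponents, Finset.mem_insert, Finset.mem_singleton, exists_eq_or_imp,
      exists_eq_left, extendExponent_add_single]
    exact coeff_eq_zero_or_of_substMat_diagonal hD h (hK k k.2) _
  choose v hv hcoeff using vanishing
  have v_injective : Function.Injective v := fun k l hkl => by
    by_contra hne
    exact Finset.disjoint_left.mp
      (pairwise_disjoint_pairExponents (Subtype.coe_injective.ne hne)) (hv k) (hkl ▸ hv l)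
  refine ⟨T, Finset.univ.image (extendExponent n τ ∘ v), P, ?_, hP, hT, ?_, ?_⟩
  · rw [Finset.card_image_of_injective _ ((extendExponent_injective n τ).comp v_injective)]
    simpa using hTK
  · exact Finset.image_subset_iff.mpr fun k _ => mem_exponentsOfDegree.mpr
      (degree_extendExponent hn τ (sum_eq_four_of_mem_pairExponents k _ (hv k)))
  · simpa [Finset.mem_image, forall_comm (α := Fin 3 →₀ ℕ)] using hcoeff

end DiagonalSymmetries

section NormalForms

variable {K ι : Type*} [Field K] [Fintype ι] [DecidableEq ι]

lemma exists_perm_forall_apply_ne_zero {P : Matrix ι ι K} (hP : P.det ≠ 0) :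
    ∃ τ : Equiv.Perm ι, ∀ i, P i (τ i) ≠ 0 := by
  by_contra! h
  refine hP ?_
  rw [← Matrix.det_transpose, Matrix.det_apply]
  refine Finset.sum_eq_zero fun τ _ => ?_
  obtain ⟨i, hi⟩ := h τ
  rw [Finset.prod_eq_zero (Finset.mem_univ i) hi, smul_zero]

lemma exists_unit_diagonal_of_diagonalization {g P : Matrix ι ι K} {D : ι → K} (hP : P.det ≠ 0)
    (h : g * P = P * Matrix.diagonal D) :
    ∃ (Q : Matrix ι ι K) (τ : Equiv.Perm ι), Q.det ≠ 0 ∧ (∀ i, Q i i = 1) ∧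
      g * Q = Q * Matrix.diagonal (D ∘ τ) := by
  obtain ⟨τ, hτ⟩ := exists_perm_forall_apply_ne_zero hP
  refine ⟨P.submatrix id τ * Matrix.diagonal fun i => (P i (τ i))⁻¹, τ, ?_, ?_, ?_⟩
  · rw [Matrix.det_mul, Matrix.det_permute', Matrix.det_diagonal]
    refine mul_ne_zero (mul_ne_zero ?_ hP)
      (Finset.prod_ne_zero_iff.mpr fun i _ => inv_ne_zero (hτ i))
    exact ((Equiv.Perm.sign τ).isUnit.map (Int.castRingHom K)).ne_zero
  · simp [hτ]
  · have permuted : g * P.submatrix id τ = P.submatrix id τ * Matrix.diagonal (D ∘ τ) := by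
      rw [← Matrix.submatrix_diagonal_equiv, Matrix.submatrix_mul_equiv, ← h,
        ← Matrix.submatrix_mul_equiv g P id (Equiv.refl ι) τ]
      rfl
    rw [← mul_assoc, permuted, mul_assoc, mul_assoc, Matrix.diagonal_mul_diagonal,
      Matrix.diagonal_mul_diagonal]
    simp only [mul_comm]

lemma eq_smul_one_add_vecMulVec_of_diagonalization {g P : Matrix ι ι K} {μ a : K} {s : ι}
    (hP : P.det ≠ 0)
    (h : g * P = P * Matrix.diagonal (Function.update (fun _ => μ) s a)) :
    g = μ • 1 + (a - μ) • Matrix.vecMulVec (P.col s) (P⁻¹.row s) := by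
  have diagonal_eq : Matrix.diagonal (Function.update (fun _ => μ) s a) =
      μ • 1 + (a - μ) • Matrix.vecMulVec (Pi.single s 1) (Pi.single s 1) := by
    rw [← Matrix.single_eq_single_vecMulVec_single]
    ext i j
    rcases eq_or_ne i j with rfl | hij
    · rcases eq_or_ne i s with rfl | hi
      · simp
      · simp [hi, hi.symm]
    · rcases eq_or_ne s i with rfl | hi
      · simp [hij]
      · simp [hij, hi]
  calc g = g * P * P⁻¹ := by rw [mul_assoc, Matrix.mul_nonsing_inv _ hP.isUnit, mul_one]
    _ = _ := by
      rw [h, diagonal_eq, mul_add, add_mul, mul_smul_comm, mul_one, smul_mul_assoc,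
        Matrix.mul_nonsing_inv _ hP.isUnit, mul_smul_comm, smul_mul_assoc, Matrix.mul_vecMulVec,
        Matrix.vecMulVec_mul, Matrix.mulVec_single_one, Matrix.single_one_vecMul]

end NormalForms

section Homologies

variable {K ι : Type*} [Field K] [DecidableEq ι]

/-- For `v` and `l` with `v t` and `l t` nonzero, the matrix whose column `t` is the multiple of `v`
with entry `1` at `t`, and whose other columns are of the form `e j - b j • e t` and killed by `l`.
It diagonalizes the homologies with center `v` and axis `l`. -/
def homologyFrame (t : ι) (v l : ι → K) : Matrix ι ι K :=
  ((1 : Matrix ι ι K).updateRow t fun j => -l j / l t).updateCol t fun i => v i / v t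

variable {t : ι} {v l : ι → K}

lemma homologyFrame_apply_eq_one_apply (hv : v t ≠ 0) {i j : ι} (hij : i = t ↔ j = t) :
    homologyFrame t v l i j = (1 : Matrix ι ι K) i j := by
  rcases eq_or_ne j t with rfl | hj
  · obtain rfl := hij.mpr rfl
    simp [homologyFrame, hv]
  · have hi : i ≠ t := fun hi => hj (hij.mp hi)
    simp [homologyFrame, hi, hj]

variable [Fintype ι]

lemma vecMul_homologyFrame (hl : l t ≠ 0) (hlv : l ⬝ᵥ v = 1) :
    Matrix.vecMul l (homologyFrame t v l) = Pi.single t (v t)⁻¹ := by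
  have col_t : (homologyFrame t v l).col t = (v t)⁻¹ • v := by
    ext i
    simp [homologyFrame, div_eq_inv_mul]
  have col_ne {j : ι} (hj : j ≠ t) :
      (homologyFrame t v l).col j = Pi.single j 1 - (l j / l t) • Pi.single t 1 := by
    ext i
    rcases eq_or_ne i t with rfl | hi
    · simp [homologyFrame, hj, hj.symm, neg_div]
    · simp [homologyFrame, hi, hj, Matrix.one_apply, Pi.single_apply]
  ext j
  change l ⬝ᵥ (homologyFrame t v l).col j = _
  rcases eq_or_ne j t with rfl | hj
  · simp [col_t, hlv]
  · simp [col_ne hj, hj, hl]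

lemma det_homologyFrame_ne_zero (hv : v t ≠ 0) (hl : l t ≠ 0) (hlv : l ⬝ᵥ v = 1) :
    (homologyFrame t v l).det ≠ 0 := by
  intro hdet
  obtain ⟨x, hx, hQx⟩ := Matrix.exists_mulVec_eq_zero_iff.mpr hdet
  have x_t : x t = 0 := by
    have := Matrix.dotProduct_mulVec l (homologyFrame t v l) x
    rw [hQx, vecMul_homologyFrame hl hlv] at this
    simpa [hv, eq_comm] using this
  refine hx (funext fun i => ?_)
  rcases eq_or_ne i t with rfl | hi
  · exact x_t
  have row_i : (homologyFrame t v l).row i = Pi.single i 1 + (v i / v t) • Pi.single t 1 := by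
    ext j
    rcases eq_or_ne j t with rfl | hj
    · simp [homologyFrame, hi.symm]
    · simp [homologyFrame, hi, hj, Matrix.one_apply, Pi.single_apply, eq_comm]
  have : (homologyFrame t v l).row i ⬝ᵥ x = 0 := congrFun hQx i
  simpa [row_i, add_dotProduct, x_t] using this

lemma homology_mul_homologyFrame (hl : l t ≠ 0) (hlv : l ⬝ᵥ v = 1) (μ a : K) :
    (μ • 1 + (a - μ) • Matrix.vecMulVec v l) * homologyFrame t v l =
      homologyFrame t v l * Matrix.diagonal (Function.update (fun _ => μ) t a) := by
  rw [add_mul, smul_mul_assoc, one_mul, smul_mul_assoc, Matrix.vecMulVec_mul,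
    vecMul_homologyFrame hl hlv]
  ext i j
  rcases eq_or_ne j t with rfl | hj
  · simp [Matrix.vecMulVec_apply, homologyFrame]
    ring
  · simp [Matrix.vecMulVec_apply, hj, mul_comm]

end Homologies

section DiagonalizableSymmetries

variable {n : ℕ} {Φ : MvPolynomial (Fin 3) ℂ} {c : ℂ} {g P : Matrix (Fin 3) (Fin 3) ℂ}

lemma substMat_diagonal_of_diagonalization {D : Fin 3 → ℂ} (h : g * P = P * Matrix.diagonal D)
    (hc : substMat g Φ = c • Φ) :
    substMat (Matrix.diagonal D) (substMat P Φ) = c • substMat P Φ := by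
  rw [substMat_substMat, ← h, ← substMat_substMat, hc, map_smul]

lemma isDegenerate_of_injective_eigenvalues (hn : 4 ≤ n) (hP : P.det ≠ 0) {D : Fin 3 → ℂ}
    (h : g * P = P * Matrix.diagonal D) (hc : substMat g Φ = c • Φ) (hD : ∀ i, D i ≠ 0)
    (hinj : Function.Injective D) : IsDegenerate n Φ := by
  obtain ⟨Q, τ, hQ, hQ1, hgQ⟩ := exists_unit_diagonal_of_diagonalization hP h
  refine isDegenerate_of_substMat_diagonal hn hQ (fun i => hD (τ i))
    (substMat_diagonal_of_diagonalization hgQ hc) (T := {p | p.1 ≠ p.2}) (fun i j hij => ?_) 1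
    (K := Finset.univ) (by decide) fun k _ => ?_
  · obtain rfl : i = j := by simpa using hij
    simp [hQ1]
  · have : ∀ k, (monomialPairs k).2.1 ≠ (monomialPairs k).2.2 := by decide
    exact (hinj.comp τ.injective).ne (this k)

lemma isDegenerate_of_homology (hn : 4 ≤ n) (hP : P.det ≠ 0) {μ a : ℂ} {s : Fin 3}
    (h : g * P = P * Matrix.diagonal (Function.update (fun _ => μ) s a))
    (hc : substMat g Φ = c • Φ) (hμ : μ ≠ 0) (ha : a ≠ 0) (hne : a ≠ μ) : IsDegenerate n Φ := by
  have row_dotProduct_col : P⁻¹.row s ⬝ᵥ P.col s = 1 :=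
    (congrFun₂ (Matrix.nonsing_inv_mul P hP.isUnit) s s).trans (Matrix.one_apply_eq s)
  obtain ⟨t, -, ht⟩ :=
    Finset.exists_ne_zero_of_sum_ne_zero (row_dotProduct_col.trans_ne one_ne_zero)
  obtain ⟨hl, hv⟩ := mul_ne_zero_iff.mp ht
  have hgQ := homology_mul_homologyFrame hl row_dotProduct_col μ a
  rw [← eq_smul_one_add_vecMulVec_of_diagonalization hP h] at hgQ
  refine isDegenerate_of_substMat_diagonal hn (det_homologyFrame_ne_zero hv hl row_dotProduct_col)
    (fun i => ?_) (substMat_diagonal_of_diagonalization hgQ hc) (T := {p | ¬(p.1 = t ↔ p.2 = t)})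
    (fun i j hij => homologyFrame_apply_eq_one_apply hv (by simpa using hij))
    (Equiv.swap 0 t) (K := {0, 1, 2, 3, 4}) ?_ fun k hk => ?_
  · rcases eq_or_ne i t with rfl | hi <;> simp [*]
  · have : ∀ t : Fin 3, Finset.card {p : Fin 3 × Fin 3 | ¬(p.1 = t ↔ p.2 = t)} = 4 := by decide
    simp [this t]
  · have firstVariables : (monomialPairs k).2 = (0, 1) := by decide +revert
    have : ∀ t : Fin 3, Equiv.swap 0 t 1 ≠ t := by decide
    simpa [firstVariables, this t] using hne

lemma exists_eq_update_const {α : Type*} {D : Fin 3 → α} (hinj : ¬ Function.Injective D)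
    (hconst : ∃ i j, D i ≠ D j) : ∃ s μ, D = Function.update (fun _ => μ) s (D s) ∧ D s ≠ μ := by
  obtain ⟨i, j, hD, hij⟩ := Function.not_injective_iff.mp hinj
  have third : ∀ i j : Fin 3, i ≠ j → ∃ s, s ≠ i ∧ s ≠ j ∧ ∀ k, k = i ∨ k = j ∨ k = s := by
    decide
  obtain ⟨s, hsi, hsj, hs⟩ := third i j hij
  refine ⟨s, D i, ?_, fun h => ?_⟩
  · ext k
    rcases hs k with rfl | rfl | rfl <;> simp [hsi.symm, hsj.symm, hD]
  · obtain ⟨k, l, hkl⟩ := hconst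
    have eq_D_i (m : Fin 3) : D m = D i := by
      rcases hs m with rfl | rfl | rfl
      exacts [rfl, hD.symm, h]
    exact hkl ((eq_D_i k).trans (eq_D_i l).symm)

lemma isDegenerate_of_diagonalization (hn : 4 ≤ n) (hP : P.det ≠ 0) (hg : g.det ≠ 0)
    {D : Fin 3 → ℂ} (h : g * P = P * Matrix.diagonal D) (hc : substMat g Φ = c • Φ)
    (hconst : ∃ i j, D i ≠ D j) : IsDegenerate n Φ := by
  have hD (i : Fin 3) : D i ≠ 0 := by
    have hdet := congrArg Matrix.det h
    rw [Matrix.det_mul, Matrix.det_mul, Matrix.det_diagonal, mul_comm] at hdet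
    exact Finset.prod_ne_zero_iff.mp (mul_left_cancel₀ hP hdet ▸ hg) i (Finset.mem_univ i)
  by_cases hinj : Function.Injective D
  · exact isDegenerate_of_injective_eigenvalues hn hP h hc hD hinj
  · obtain ⟨s, μ, hDs, hne⟩ := exists_eq_update_const hinj hconst
    have hμ : μ ≠ 0 := by
      obtain ⟨k, hk⟩ := exists_ne s
      have := hD k
      rwa [hDs, Function.update_of_ne hk] at this
    rw [hDs] at h
    exact isDegenerate_of_homology hn hP h hc hμ (hD s) hne

end DiagonalizableSymmetries

section LinearStabilizer

variable {Φ : MvPolynomial (Fin 3) ℂ}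

/-- The group of linear maps under which `Φ` is semi-invariant. It is the preimage in `GL₃(ℂ)` of
the stabilizer of the curve `Φ = 0`. -/
def linearStabilizer (Φ : MvPolynomial (Fin 3) ℂ) : Subgroup (GL (Fin 3) ℂ) where
  carrier := {g | ∃ c : ℂ, c ≠ 0 ∧ substMat g Φ = c • Φ}
  one_mem' := ⟨1, one_ne_zero, by simp [substMat_one]⟩
  mul_mem' := by
    rintro g h ⟨c, hc, hg⟩ ⟨d, hd, hh⟩
    refine ⟨c * d, mul_ne_zero hc hd, ?_⟩
    rw [Units.val_mul, ← substMat_substMat, hg, map_smul, hh, smul_smul]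
  inv_mem' := by
    rintro g ⟨c, hc, hg⟩
    refine ⟨c⁻¹, inv_ne_zero hc, ?_⟩
    rw [eq_inv_smul_iff₀ hc, ← map_smul, ← hg, substMat_substMat, ← Units.val_mul, mul_inv_cancel,
      Units.val_one, substMat_one]

end LinearStabilizer

section GradientBounds

open Topology

lemma exists_eventually_forall_le_of_isCompact {H X : Type*} [TopologicalSpace H]
    [TopologicalSpace X] {G : H → X → ℝ} (hG : Continuous G.uncurry) {s : Set X} (hs : IsCompact s)
    {h₀ : H} (hpos : ∀ x ∈ s, 0 < G h₀ x) :
    ∃ B, ∀ᶠ h in 𝓝 h₀, ∀ x ∈ s, 1 ≤ B * G h x ∧ G h x ≤ B := by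
  have hG₀ : Continuous (G h₀) := hG.uncurry_left h₀
  obtain ⟨B₁, hB₁⟩ := hs.bddAbove_image hG₀.continuousOn
  obtain ⟨B₂, hB₂⟩ := hs.bddAbove_image (hG₀.continuousOn.inv₀ fun x hx => (hpos x hx).ne')
  refine ⟨max B₁ B₂ + 1, hs.eventually_forall_of_forall_eventually fun x hx => ?_⟩
  have upper : G h₀ x < max B₁ B₂ + 1 :=
    (le_max_of_le_left (hB₁ (Set.mem_image_of_mem _ hx))).trans_lt (lt_add_one _)
  have lower : 1 < (max B₁ B₂ + 1) * G h₀ x := by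
    rw [← inv_lt_iff_one_lt_mul₀ (hpos x hx)]
    exact (le_max_of_le_right (hB₂ (Set.mem_image_of_mem _ hx))).trans_lt (lt_add_one _)
  have hGx : Continuous fun z : H × X => G z.1 z.2 := hG
  filter_upwards [(continuous_const.mul hGx).continuousAt.eventually_const_lt lower,
    hGx.continuousAt.eventually_lt_const upper] with z hz₁ hz₂
  exact ⟨hz₁.le, hz₂.le⟩

variable {n : ℕ}

lemma continuous_coeff (d : Fin 3 →₀ ℕ) :
    Continuous fun Φ : MvPolynomial (Fin 3) ℂ => coeff d Φ := by
  have continuous_coeffs : Continuous fun (Φ : MvPolynomial (Fin 3) ℂ) d => coeff d Φ :=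
    continuous_induced_dom
  exact (continuous_apply d).comp continuous_coeffs

lemma continuous_eval_homogeneousSubmodule (n : ℕ) :
    Continuous fun p : homogeneousSubmodule (Fin 3) ℂ n × (Fin 3 → ℂ) =>
      eval p.2 (p.1 : MvPolynomial (Fin 3) ℂ) := by
  have continuous_coeff_fst (d : Fin 3 →₀ ℕ) : Continuous fun
      p : homogeneousSubmodule (Fin 3) ℂ n × (Fin 3 → ℂ) =>
        coeff d (p.1 : MvPolynomial (Fin 3) ℂ) :=
    (continuous_coeff d).comp (continuous_subtype_val.comp continuous_fst)
  have eval_eq_sum (p : homogeneousSubmodule (Fin 3) ℂ n × (Fin 3 → ℂ)) :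
      eval p.2 (p.1 : MvPolynomial (Fin 3) ℂ) =
        ∑ d ∈ exponentsOfDegree (Fin 3) n, coeff d p.1.1 * ∏ i, p.2 i ^ d i := by
    rw [eval_eq']
    refine Finset.sum_subset (support_subset_exponentsOfDegree p.1.2) fun d _ hd => ?_
    rw [notMem_support_iff.mp hd, zero_mul]
  simp only [eval_eq_sum]
  fun_prop

lemma continuous_pderiv (i : Fin 3) :
    Continuous fun Φ : MvPolynomial (Fin 3) ℂ => pderiv i Φ := by
  refine continuous_induced_rng.mpr (continuous_pi fun d => ?_)
  simp only [Function.comp_apply, coeff_pderiv]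
  exact (continuous_coeff _).mul_const _

lemma continuous_grad_homogeneousSubmodule (n : ℕ) :
    Continuous fun p : homogeneousSubmodule (Fin 3) ℂ n × (Fin 3 → ℂ) =>
      grad (p.1 : MvPolynomial (Fin 3) ℂ) p.2 := by
  refine continuous_pi fun i => ?_
  have continuous_pderiv_fst : Continuous fun p : homogeneousSubmodule (Fin 3) ℂ n × (Fin 3 → ℂ) =>
      (⟨pderiv i p.1.1, p.1.2.pderiv⟩ : homogeneousSubmodule (Fin 3) ℂ (n - 1)) :=
    ((continuous_pderiv i).comp (continuous_subtype_val.comp continuous_fst)).subtype_mk _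
  have := (continuous_eval_homogeneousSubmodule (n - 1)).comp
    (continuous_pderiv_fst.prodMk continuous_snd)
  simpa only [Function.comp_def, grad] using this

/-- The norm of the gradient of `Φ`, a form of degree `n`, is comparable to `‖x‖ ^ (n - 1)` with
constant `B`. -/
def HasGradientBound (n : ℕ) (B : ℝ) (Φ : MvPolynomial (Fin 3) ℂ) : Prop :=
  ∀ x : Fin 3 → ℂ, ‖x‖ ^ (n - 1) ≤ B * ‖grad Φ x‖ ∧ ‖grad Φ x‖ ≤ B * ‖x‖ ^ (n - 1)

lemma HasGradientBound.smoothCurve {B : ℝ} {Φ : MvPolynomial (Fin 3) ℂ}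
    (hB : HasGradientBound n B Φ) : SmoothCurve Φ := by
  intro q hq
  have grad_q : grad Φ q = 0 := funext hq
  have := (hB q).1
  rw [grad_q, norm_zero, mul_zero] at this
  exact norm_eq_zero.mp
    (eq_zero_of_pow_eq_zero (this.antisymm (pow_nonneg (norm_nonneg q) _)))

lemma hasGradientBound_of_sphere (hn : 2 ≤ n) {B : ℝ} {Φ : MvPolynomial (Fin 3) ℂ}
    (h : Φ.IsHomogeneous n)
    (hB : ∀ x ∈ Metric.sphere (0 : Fin 3 → ℂ) 1, 1 ≤ B * ‖grad Φ x‖ ∧ ‖grad Φ x‖ ≤ B) :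
    HasGradientBound n B Φ := by
  intro x
  rcases eq_or_ne x 0 with rfl | hx
  · have grad_zero : grad Φ (0 : Fin 3 → ℂ) = 0 := by
      simpa [show n - 1 ≠ 0 by omega] using grad_smul_of_isHomogeneous h 0 (0 : Fin 3 → ℂ)
    simp [grad_zero, show n - 1 ≠ 0 by omega]
  have hx' : (‖x‖ : ℂ) ≠ 0 := by simpa using hx
  obtain ⟨lower, upper⟩ := hB ((‖x‖ : ℂ)⁻¹ • x) (by simp [norm_smul, hx])
  have norm_grad : ‖grad Φ x‖ = ‖x‖ ^ (n - 1) * ‖grad Φ ((‖x‖ : ℂ)⁻¹ • x)‖ := by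
    conv_lhs => rw [← smul_inv_smul₀ hx' x, grad_smul_of_isHomogeneous h]
    simp [norm_smul]
  rw [norm_grad]
  constructor
  · calc ‖x‖ ^ (n - 1) = ‖x‖ ^ (n - 1) * 1 := (mul_one _).symm
      _ ≤ ‖x‖ ^ (n - 1) * (B * ‖grad Φ ((‖x‖ : ℂ)⁻¹ • x)‖) := by gcongr
      _ = _ := by ring
  · rw [mul_comm B]
    gcongr

lemma SmoothCurve.exists_eventually_hasGradientBound (hn : 2 ≤ n)
    {Φ₀ : homogeneousSubmodule (Fin 3) ℂ n} (h : SmoothCurve (Φ₀ : MvPolynomial (Fin 3) ℂ)) :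
    ∃ B, ∀ᶠ Φ : homogeneousSubmodule (Fin 3) ℂ n in 𝓝 Φ₀,
      HasGradientBound n B (Φ : MvPolynomial (Fin 3) ℂ) := by
  obtain ⟨B, hB⟩ := exists_eventually_forall_le_of_isCompact
    (G := fun (Φ : homogeneousSubmodule (Fin 3) ℂ n) x => ‖grad Φ.1 x‖)
    (continuous_grad_homogeneousSubmodule n).norm (isCompact_sphere (0 : Fin 3 → ℂ) 1)
    (h₀ := Φ₀) fun x hx => norm_pos_iff.mpr fun h0 =>
      ne_zero_of_mem_unit_sphere ⟨x, hx⟩ (h x (congrFun h0))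
  exact ⟨B, hB.mono fun Φ hΦ => hasGradientBound_of_sphere hn Φ.2 hΦ⟩

end GradientBounds

section ConditionNumber

lemma opNorm_pow_le_of_forall_norm_pow_le {𝕜 E F : Type*} [NontriviallyNormedField 𝕜]
    [NormedAddCommGroup E] [NormedSpace 𝕜 E] [NormedAddCommGroup F] [NormedSpace 𝕜 F]
    {f : E →L[𝕜] F} {k : ℕ} (hk : k ≠ 0) {c : ℝ} (hc : 0 ≤ c)
    (h : ∀ x, ‖f x‖ ^ k ≤ c * ‖x‖ ^ k) : ‖f‖ ^ k ≤ c := by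
  have root_pow : (c ^ (k⁻¹ : ℝ)) ^ k = c := Real.rpow_inv_natCast_pow hc hk
  have root_nonneg : 0 ≤ c ^ (k⁻¹ : ℝ) := Real.rpow_nonneg hc _
  rw [← root_pow]
  gcongr
  refine f.opNorm_le_bound root_nonneg fun x => ?_
  rw [← pow_le_pow_iff_left₀ (norm_nonneg _) (by positivity) hk, mul_pow, root_pow]
  exact h x

attribute [local instance] Matrix.linftyOpNormedAddCommGroup Matrix.linftyOpNormedRing
  Matrix.linftyOpNormedAlgebra

lemma linfty_opNorm_transpose_le {m n : Type*} [Fintype m] [Fintype n] (A : Matrix m n ℂ) :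
    ‖A.transpose‖ ≤ Fintype.card m * ‖A‖ := by
  have norm_entry_le (i : m) (j : n) : ‖A i j‖₊ ≤ ‖A‖₊ := by
    rw [Matrix.linfty_opNNNorm_def]
    exact (Finset.single_le_sum (f := fun j => ‖A i j‖₊) (fun _ _ => zero_le)
      (Finset.mem_univ j)).trans (Finset.le_sup (f := fun i => ∑ j, ‖A i j‖₊) (Finset.mem_univ i))
  have : ‖A.transpose‖₊ ≤ Fintype.card m * ‖A‖₊ := by
    rw [Matrix.linfty_opNNNorm_def A.transpose, ← nsmul_eq_mul]
    exact Finset.sup_le fun j _ => Finset.sum_le_card_nsmul _ _ _ fun i _ => norm_entry_le i j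
  exact_mod_cast this

variable {n : ℕ} {B : ℝ} {Φ : MvPolynomial (Fin 3) ℂ}

lemma HasGradientBound.norm_pow_le (hn : 2 ≤ n) (hΦ : HasGradientBound n B Φ) (hB : 0 ≤ B)
    {g : GL (Fin 3) ℂ} {c : ℂ} (hc : substMat g Φ = c • Φ) :
    ‖(g : Matrix (Fin 3) (Fin 3) ℂ)‖ ^ (n - 1) ≤
      B ^ 2 * (‖c‖ * ‖((g⁻¹ : GL (Fin 3) ℂ) : Matrix (Fin 3) (Fin 3) ℂ).transpose‖) := by
  set A : Matrix (Fin 3) (Fin 3) ℂ := ↑(g⁻¹)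
  have grad_mulVec (x : Fin 3 → ℂ) :
      grad Φ (g.val.mulVec x) = c • A.transpose.mulVec (grad Φ x) := by
    rw [← Matrix.mulVec_smul, ← grad_smul, ← hc, grad_substMat, Matrix.mulVec_mulVec,
      ← Matrix.transpose_mul, ← Units.val_mul, mul_inv_cancel, Units.val_one,
      Matrix.transpose_one, Matrix.one_mulVec]
  rw [Matrix.linfty_opNorm_eq_opNorm g.val]
  refine opNorm_pow_le_of_forall_norm_pow_le (by omega) (by positivity) fun x => ?_
  calc ‖g.val.mulVec x‖ ^ (n - 1)
      ≤ B * ‖grad Φ (g.val.mulVec x)‖ := (hΦ _).1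
    _ ≤ B * (‖c‖ * (‖A.transpose‖ * (B * ‖x‖ ^ (n - 1)))) := by
      rw [grad_mulVec, norm_smul]
      gcongr
      exact (Matrix.linfty_opNorm_mulVec _ _).trans (by gcongr; exact (hΦ x).2)
    _ = _ := by ring

/-- The condition number of an invertible matrix, for the operator norm on `ℂ ^ ι` with its sup
norm. -/
def conditionNumber {ι : Type*} [Fintype ι] [DecidableEq ι] (g : GL ι ℂ) : ℝ :=
  ‖(g : Matrix ι ι ℂ)‖ * ‖((g⁻¹ : GL ι ℂ) : Matrix ι ι ℂ)‖

lemma one_le_conditionNumber {ι : Type*} [Fintype ι] [DecidableEq ι] [Nonempty ι] (g : GL ι ℂ) :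
    1 ≤ conditionNumber g := by
  have := norm_mul_le g.val (g⁻¹).val
  rwa [← Units.val_mul, mul_inv_cancel, Units.val_one, norm_one] at this

lemma HasGradientBound.conditionNumber_le (hn : 3 ≤ n) (hΦ : HasGradientBound n B Φ)
    {g : GL (Fin 3) ℂ} (hg : g ∈ linearStabilizer Φ) : conditionNumber g ≤ 9 * B ^ 4 := by
  obtain ⟨c, hc0, hc⟩ := hg
  have hB : 0 ≤ B := by
    obtain ⟨h, -⟩ := hΦ (Pi.single 0 1)
    rw [Pi.norm_single, norm_one, one_pow] at h
    by_contra! hB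
    linarith [mul_nonpos_of_nonpos_of_nonneg hB.le (norm_nonneg (grad Φ (Pi.single 0 1)))]
  have hc_inv : substMat (g⁻¹ : GL (Fin 3) ℂ) Φ = c⁻¹ • Φ := by
    rw [eq_inv_smul_iff₀ hc0, ← map_smul, ← hc, substMat_substMat, ← Units.val_mul, mul_inv_cancel,
      Units.val_one, substMat_one]
  have bound := hΦ.norm_pow_le (by omega) hB hc
  have bound_inv := hΦ.norm_pow_le (by omega) hB hc_inv
  rw [inv_inv, norm_inv] at bound_inv
  have transpose_g := linfty_opNorm_transpose_le g.val
  have transpose_g_inv := linfty_opNorm_transpose_le (g⁻¹).val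
  rw [Fintype.card_fin, Nat.cast_ofNat] at transpose_g transpose_g_inv
  have hκ := one_le_conditionNumber g
  have sq_le : conditionNumber g * conditionNumber g ≤ 9 * B ^ 4 * conditionNumber g :=
    calc conditionNumber g * conditionNumber g
        = conditionNumber g ^ 2 := (sq _).symm
      _ ≤ conditionNumber g ^ (n - 1) := pow_le_pow_right₀ hκ (by omega)
      _ = ‖g.val‖ ^ (n - 1) * ‖(g⁻¹).val‖ ^ (n - 1) := mul_pow _ _ _
      _ ≤ (B ^ 2 * (‖c‖ * (3 * ‖(g⁻¹).val‖))) * (B ^ 2 * (‖c‖⁻¹ * (3 * ‖g.val‖))) := by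
        gcongr
        · exact bound.trans (by gcongr)
        · exact bound_inv.trans (by gcongr)
      _ = 9 * B ^ 4 * conditionNumber g * (‖c‖ * ‖c‖⁻¹) := by
        rw [conditionNumber]; ring
      _ = 9 * B ^ 4 * conditionNumber g := by
        rw [mul_inv_cancel₀ (norm_ne_zero_iff.mpr hc0), mul_one]
  exact le_of_mul_le_mul_right sq_le (by linarith)

end ConditionNumber

section Diagonalization

lemma maxGenEigenspace_eq_eigenspace {K V : Type*} [Field K] [AddCommGroup V] [Module K V]
    {f : Module.End K V} {μ : K} (h : ∀ v, (f - μ • 1) ((f - μ • 1) v) = 0 → (f - μ • 1) v = 0) :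
    f.maxGenEigenspace μ = f.eigenspace μ := by
  refine le_antisymm (fun v hv => ?_) f.eigenspace_le_maxGenEigenspace
  obtain ⟨k, hk⟩ := (f.mem_maxGenEigenspace μ v).mp hv
  rw [Module.End.eigenspace_def, LinearMap.mem_ker]
  induction k with
  | zero => rw [show v = 0 from hk, map_zero]
  | succ k ih =>
    rcases k with _ | k
    · simpa using hk
    · refine ih ?_
      rw [pow_succ', Module.End.mul_apply, pow_succ', Module.End.mul_apply] at hk
      rw [pow_succ', Module.End.mul_apply]
      exact h _ hk

lemma exists_basis_eigenvectors {K V ι : Type*} [Field K] [AddCommGroup V] [Module K V]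
    (b : Module.Basis ι K V) {f : Module.End K V} (h : ⨆ μ, f.eigenspace μ = ⊤) :
    ∃ (b' : Module.Basis ι K V) (D : ι → K), ∀ i, f (b' i) = D i • b' i := by
  have span_eigenvectors : ⊤ ≤ Submodule.span K {v : V | ∃ μ : K, f v = μ • v} := by
    rw [← h]
    exact iSup_le fun μ v hv => Submodule.subset_span ⟨μ, Module.End.mem_eigenspace_iff.mp hv⟩
  let b₀ := Module.Basis.ofSpan span_eigenvectors
  choose D hD using fun i => Module.Basis.ofSpan_subset span_eigenvectors ⟨i, rfl⟩
  refine ⟨b₀.reindex (b₀.indexEquiv b), D ∘ (b₀.indexEquiv b).symm, fun i => ?_⟩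
  rw [Module.Basis.reindex_apply]
  exact hD _

lemma exists_mul_eq_mul_diagonal {K ι : Type*} [Field K] [Fintype ι] [DecidableEq ι]
    {g : Matrix ι ι K} (h : ⨆ μ, Module.End.eigenspace (Matrix.toLin' g) μ = ⊤) :
    ∃ (P : Matrix ι ι K) (D : ι → K), P.det ≠ 0 ∧ g * P = P * Matrix.diagonal D := by
  obtain ⟨b, D, hD⟩ := exists_basis_eigenvectors (Pi.basisFun K ι) h
  refine ⟨(Pi.basisFun K ι).toMatrix b, D, ?_, ?_⟩
  · exact ((Pi.basisFun K ι).isUnit_det b).ne_zero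
  · ext i j
    have := congrFun (hD j) i
    rw [Matrix.mul_diagonal]
    simpa [Matrix.mul_apply, Matrix.mulVec, dotProduct, Module.Basis.toMatrix_apply, mul_comm]
      using this

open Matrix

section JordanChain

variable {R ι : Type*} [CommRing R] [Fintype ι] [DecidableEq ι] {A : Matrix ι ι R} {α : R}
  {v w : ι → R}

lemma pow_mulVec_of_eigenvector (hw : A *ᵥ w = α • w) (k : ℕ) : (A ^ k) *ᵥ w = α ^ k • w := by
  induction k with
  | zero => simp
  | succ k ih => rw [pow_succ, ← mulVec_mulVec, hw, mulVec_smul, ih, smul_smul, pow_succ']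

-- The factor `α` on both sides avoids the exponent `k - 1`.
lemma smul_pow_mulVec_of_jordanChain (hv : A *ᵥ v = α • v + w) (hw : A *ᵥ w = α • w) (k : ℕ) :
    α • (A ^ k) *ᵥ v = α ^ k • (α • v + (k : R) • w) := by
  induction k with
  | zero => simp
  | succ k ih =>
    rw [pow_succ', ← mulVec_mulVec, ← mulVec_smul, ih, mulVec_smul, mulVec_add, mulVec_smul,
      mulVec_smul, hv, hw]
    push_cast
    module

end JordanChain

attribute [local instance] Matrix.linftyOpNormedAddCommGroup

variable {ι : Type*} [Fintype ι] [DecidableEq ι] {g : GL ι ℂ} {M : ℝ}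

-- On a nontrivial Jordan block the condition number of `g ^ k` grows linearly in `k`.
lemma eq_zero_of_conditionNumber_pow_le (hM : ∀ k : ℕ, conditionNumber (g ^ k) ≤ M) {α : ℂ}
    {v w : ι → ℂ} (hv : g.val *ᵥ v = α • v + w) (hw : g.val *ᵥ w = α • w) : w = 0 := by
  have pow_mulVec_v (k : ℕ) : α • (g ^ k).val *ᵥ v = α ^ k • (α • v + (k : ℂ) • w) := by
    rw [Units.val_pow_eq_pow_val, smul_pow_mulVec_of_jordanChain hv hw]
  by_contra hw₀
  have norm_w : 0 < ‖w‖ := norm_pos_iff.mpr hw₀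
  have one_le (k : ℕ) : 1 ≤ ‖(g ^ k)⁻¹.val‖ * ‖α‖ ^ k := by
    have : w = (g ^ k)⁻¹.val *ᵥ (α ^ k • w) := by
      rw [← pow_mulVec_of_eigenvector hw, ← Units.val_pow_eq_pow_val, mulVec_mulVec,
        ← Units.val_mul, inv_mul_cancel, Units.val_one, one_mulVec]
    refine le_of_mul_le_mul_right ?_ norm_w
    calc 1 * ‖w‖ = ‖(g ^ k)⁻¹.val *ᵥ (α ^ k • w)‖ := by rw [one_mul, ← this]
      _ ≤ ‖(g ^ k)⁻¹.val‖ * ‖α ^ k • w‖ := linfty_opNorm_mulVec _ _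
      _ = _ := by rw [norm_smul, norm_pow, mul_assoc]
  have norm_le (k : ℕ) : ‖α • v + (k : ℂ) • w‖ ≤ M * (‖α‖ * ‖v‖) :=
    calc ‖α • v + (k : ℂ) • w‖ = 1 * ‖α • v + (k : ℂ) • w‖ := (one_mul _).symm
      _ ≤ (‖(g ^ k)⁻¹.val‖ * ‖α‖ ^ k) * ‖α • v + (k : ℂ) • w‖ := by gcongr; exact one_le k
      _ = ‖(g ^ k)⁻¹.val‖ * (‖α‖ * ‖(g ^ k).val *ᵥ v‖) := by
        rw [mul_assoc, ← norm_pow, ← norm_smul, ← pow_mulVec_v, norm_smul]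
      _ ≤ ‖(g ^ k)⁻¹.val‖ * (‖α‖ * (‖(g ^ k).val‖ * ‖v‖)) := by
        gcongr
        exact linfty_opNorm_mulVec _ _
      _ = conditionNumber (g ^ k) * (‖α‖ * ‖v‖) := by rw [conditionNumber]; ring
      _ ≤ M * (‖α‖ * ‖v‖) := by gcongr; exact hM k
  obtain ⟨k, hk⟩ := exists_nat_gt ((M * (‖α‖ * ‖v‖) + ‖α‖ * ‖v‖) / ‖w‖)
  rw [div_lt_iff₀ norm_w] at hk
  have triangle := norm_sub_le (α • v + (k : ℂ) • w) (α • v)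
  rw [add_sub_cancel_left, norm_smul, norm_smul, Complex.norm_natCast] at triangle
  linarith [norm_le k]

lemma exists_diagonalization_of_conditionNumber_pow_le
    (hM : ∀ k : ℕ, conditionNumber (g ^ k) ≤ M) :
    ∃ (P : Matrix ι ι ℂ) (D : ι → ℂ), P.det ≠ 0 ∧ g * P = P * diagonal D := by
  refine exists_mul_eq_mul_diagonal ?_
  rw [← Module.End.iSup_maxGenEigenspace_eq_top (Matrix.toLin' g.val)]
  refine iSup_congr fun α => (maxGenEigenspace_eq_eigenspace fun v hv => ?_).symm
  rw [LinearMap.sub_apply (x := (toLin' g.val - α • 1) v), sub_eq_zero] at hv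
  exact eq_zero_of_conditionNumber_pow_le hM (v := v) (by simp) hv

end Diagonalization

section NoSmallSubgroups

lemma mkQ_one_algebraMap_add_sq {R A : Type*} [CommRing R] [Ring A] [Algebra R A] (r : R) (a : A) :
    (1 : Submodule R A).mkQ ((algebraMap R A r + a) ^ 2) =
      (2 * r) • (1 : Submodule R A).mkQ a + (1 : Submodule R A).mkQ (a ^ 2) := by
  rw [← map_smul, ← map_add, ← sub_eq_zero, ← map_sub, Submodule.mkQ_apply,
    Submodule.Quotient.mk_eq_zero, Submodule.mem_one]
  refine ⟨r ^ 2, ?_⟩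
  simp only [sq, mul_add, add_mul, Algebra.smul_def, map_mul, two_mul, map_add,
    ← Algebra.commutes r a]
  abel

variable (𝕜 : Type*) {A : Type*} [RCLike 𝕜] [NormedRing A] [NormedAlgebra 𝕜 A]

/-- The norm of `a` modulo scalars, that is, the distance from `a` to the line `𝕜 • 1`. -/
def normModScalars (a : A) : ℝ := ‖(1 : Submodule 𝕜 A).mkQ a‖

lemma normModScalars_nonneg (a : A) : 0 ≤ normModScalars 𝕜 a := norm_nonneg _

lemma normModScalars_smul (c : 𝕜) (a : A) :
    normModScalars 𝕜 (c • a) = ‖c‖ * normModScalars 𝕜 a := by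
  rw [normModScalars, map_smul, norm_smul, normModScalars]

lemma continuous_normModScalars : Continuous (normModScalars 𝕜 : A → ℝ) :=
  continuous_norm.comp continuous_quot_mk

variable {𝕜}

lemma normModScalars_eq_zero_iff {a : A} :
    normModScalars 𝕜 a = 0 ↔ a ∈ (1 : Submodule 𝕜 A) := by
  have : FiniteDimensional 𝕜 (1 : Submodule 𝕜 A) := by
    rw [Submodule.one_eq_range]
    infer_instance
  have : IsClosed ((1 : Submodule 𝕜 A) : Set A) := Submodule.closed_of_finiteDimensional _
  exact QuotientAddGroup.norm_mk_eq_zero (S := (1 : Submodule 𝕜 A).toAddSubgroup)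

variable [NormOneClass A]

-- If `a = s + e` with `s` scalar and `e` small, then `a ^ 2 = s ^ 2 + 2 s e + e ^ 2`, which modulo
-- scalars is close to `2 s e`.
lemma mul_normModScalars_le_normModScalars_sq {a : A} (ha : 16 * normModScalars 𝕜 a ≤ ‖a‖) :
    3 / 2 * (‖a‖ * normModScalars 𝕜 a) ≤ normModScalars 𝕜 (a ^ 2) := by
  rcases (normModScalars_nonneg 𝕜 a).eq_or_lt with h₀ | h₀
  · rw [← h₀, mul_zero, mul_zero]
    exact normModScalars_nonneg 𝕜 _
  obtain ⟨e, mk_e, norm_e_lt⟩ := Submodule.Quotient.norm_mk_lt ((1 : Submodule 𝕜 A).mkQ a) h₀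
  obtain ⟨s, hs⟩ := Submodule.mem_one.mp ((Submodule.Quotient.eq _).mp mk_e.symm)
  have hs' : a = algebraMap 𝕜 A s + e := by rw [hs, sub_add_cancel]
  have norm_e : ‖e‖ ≤ 2 * normModScalars 𝕜 a := by
    rw [two_mul]
    exact norm_e_lt.le
  have norm_s : ‖a‖ ≤ ‖s‖ + ‖e‖ := by
    rw [← norm_algebraMap' A s, hs']
    exact norm_add_le _ _
  have norm_mk_e : normModScalars 𝕜 (e ^ 2) ≤ ‖e‖ ^ 2 :=
    (Submodule.Quotient.norm_mk_le _ _).trans (norm_pow_le e 2)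
  have triangle : 2 * ‖s‖ * normModScalars 𝕜 a - ‖e‖ ^ 2 ≤ normModScalars 𝕜 (a ^ 2) := by
    have := norm_sub_le_norm_add ((2 * s) • (1 : Submodule 𝕜 A).mkQ e)
      ((1 : Submodule 𝕜 A).mkQ (e ^ 2))
    rw [← mkQ_one_algebraMap_add_sq, norm_smul, norm_mul, RCLike.norm_ofNat, ← hs',
      Submodule.mkQ_apply _ e, mk_e] at this
    exact (sub_le_sub_left norm_mk_e _).trans this
  nlinarith [norm_nonneg e]

lemma exists_norm_pow_le_normModScalars_pow {a : A} (ha : 0 < normModScalars 𝕜 a) :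
    ∃ k, ‖a ^ k‖ ≤ 16 * normModScalars 𝕜 (a ^ k) := by
  by_contra! far
  have norm_pow_pos (k : ℕ) : 0 < ‖a ^ k‖ :=
    (mul_nonneg (by norm_num) (normModScalars_nonneg 𝕜 _)).trans_lt (far k)
  have ratio_le (j : ℕ) : (3 / 2) ^ j * normModScalars 𝕜 a * ‖a ^ 2 ^ j‖ ≤
      normModScalars 𝕜 (a ^ 2 ^ j) * ‖a‖ := by
    induction j with
    | zero => simp
    | succ j ih =>
      rw [pow_succ 2, pow_mul]
      set b := a ^ 2 ^ j
      calc (3 / 2) ^ (j + 1) * normModScalars 𝕜 a * ‖b ^ 2‖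
          ≤ (3 / 2) ^ (j + 1) * normModScalars 𝕜 a * ‖b‖ ^ 2 := by
            gcongr
            exact norm_pow_le b 2
        _ = 3 / 2 * ‖b‖ * ((3 / 2) ^ j * normModScalars 𝕜 a * ‖b‖) := by ring
        _ ≤ 3 / 2 * ‖b‖ * (normModScalars 𝕜 b * ‖a‖) := by gcongr
        _ = 3 / 2 * (‖b‖ * normModScalars 𝕜 b) * ‖a‖ := by ring
        _ ≤ normModScalars 𝕜 (b ^ 2) * ‖a‖ := by
            gcongr
            exact mul_normModScalars_le_normModScalars_sq (far _).le
  obtain ⟨j, hj⟩ := pow_unbounded_of_one_lt (‖a‖ / normModScalars 𝕜 a)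
    (show (1 : ℝ) < 3 / 2 by norm_num)
  rw [div_lt_iff₀ ha] at hj
  nlinarith [ratio_le j, far (2 ^ j), norm_pow_pos (2 ^ j), norm_nonneg a,
    normModScalars_nonneg 𝕜 (a ^ 2 ^ j)]

end NoSmallSubgroups

section Openness

open Topology

attribute [local instance] Matrix.linftyOpNormedAddCommGroup Matrix.linftyOpNormedRing
  Matrix.linftyOpNormedAlgebra

lemma mem_center_iff_normModScalars_eq_zero {ι : Type*} [Fintype ι] [DecidableEq ι] {g : GL ι ℂ} :
    g ∈ Subgroup.center (GL ι ℂ) ↔ normModScalars ℂ g.val = 0 := by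
  rw [Matrix.GeneralLinearGroup.mem_center_iff_val_mem_range_scalar, normModScalars_eq_zero_iff,
    Submodule.mem_one]
  rfl

lemma exists_isCompact_noncentral (ι : Type*) [Fintype ι] [DecidableEq ι] [Nonempty ι] (M : ℝ) :
    ∃ K : Set (Matrix ι ι ℂ), IsCompact K ∧
      (∀ A ∈ K, ∃ g : GL ι ℂ, g.val = A ∧ g ∉ Subgroup.center (GL ι ℂ)) ∧
      ∀ g ∉ Subgroup.center (GL ι ℂ), (∀ k : ℕ, conditionNumber (g ^ k) ≤ M) →
        ∃ (k : ℕ) (ρ : ℂ), ρ • (g ^ k).val ∈ K := by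
  have : ProperSpace (Matrix ι ι ℂ) := FiniteDimensional.proper ℂ _
  let S : Set (Matrix ι ι ℂ × Matrix ι ι ℂ) :=
    {p | p.1 * p.2 = 1 ∧ 1 ≤ 16 * normModScalars ℂ p.1}
  have isClosed_S : IsClosed S :=
    (isClosed_eq (continuous_fst.mul continuous_snd) continuous_const).inter
      (isClosed_le continuous_const
        (((continuous_normModScalars ℂ).comp continuous_fst).const_mul 16))
  refine ⟨Prod.fst '' (Metric.closedBall 0 1 ×ˢ Metric.closedBall 0 M ∩ S),
    (((isCompact_closedBall _ _).prod (isCompact_closedBall _ _)).inter_right isClosed_S).image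
      continuous_fst, ?_, fun g hg hM => ?_⟩
  · rintro _ ⟨⟨A, A'⟩, ⟨-, hA, far⟩, rfl⟩
    refine ⟨⟨A, A', hA, mul_eq_one_comm.mp hA⟩, rfl, fun hg => ?_⟩
    rw [mem_center_iff_normModScalars_eq_zero] at hg
    norm_num [hg] at far
  · rw [mem_center_iff_normModScalars_eq_zero] at hg
    obtain ⟨k, hk⟩ := exists_norm_pow_le_normModScalars_pow
      ((normModScalars_nonneg ℂ g.val).lt_of_ne' hg)
    rw [← Units.val_pow_eq_pow_val] at hk
    have norm_pos : 0 < ‖(g ^ k).val‖ := norm_pos_iff.mpr (g ^ k).ne_zero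
    have norm_ne : (‖(g ^ k).val‖ : ℂ) ≠ 0 := by exact_mod_cast norm_pos.ne'
    refine ⟨k, (‖(g ^ k).val‖ : ℂ)⁻¹, ((‖(g ^ k).val‖ : ℂ)⁻¹ • (g ^ k).val,
      (‖(g ^ k).val‖ : ℂ) • (g ^ k)⁻¹.val), ⟨⟨?_, ?_⟩, ?_, ?_⟩, rfl⟩
    · rw [mem_closedBall_zero_iff, norm_smul, norm_inv, Complex.norm_real, norm_norm,
        inv_mul_cancel₀ norm_pos.ne']
    · rw [mem_closedBall_zero_iff, norm_smul, Complex.norm_real, norm_norm]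
      exact hM k
    · simp only [smul_mul_smul_comm, inv_mul_cancel₀ norm_ne, one_smul, Units.mul_inv]
    · simp only [normModScalars_smul, norm_inv, Complex.norm_real, norm_norm]
      rwa [mul_left_comm, ← div_eq_inv_mul, one_le_div norm_pos]

lemma exists_eq_smul_of_eval_mul_eval {σ K : Type*} [Field K] [Infinite K]
    {Φ Ψ : MvPolynomial σ K} (hΦ : Φ ≠ 0)
    (h : ∀ x z, eval x Ψ * eval z Φ = eval z Ψ * eval x Φ) : ∃ c : K, Ψ = c • Φ := by
  obtain ⟨z, hz⟩ : ∃ z, eval z Φ ≠ 0 := by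
    by_contra! vanish
    exact hΦ (MvPolynomial.funext fun x => by rw [vanish x, map_zero])
  refine ⟨eval z Ψ / eval z Φ, MvPolynomial.funext fun x => ?_⟩
  rw [smul_eval, div_mul_eq_mul_div, eq_div_iff hz, h x z]

variable {n : ℕ}

lemma continuous_eval_substMat (n : ℕ) (x : Fin 3 → ℂ) :
    Continuous fun p : homogeneousSubmodule (Fin 3) ℂ n × Matrix (Fin 3) (Fin 3) ℂ =>
      eval x (substMat p.2 (p.1 : MvPolynomial (Fin 3) ℂ)) := by
  have : Continuous fun p : homogeneousSubmodule (Fin 3) ℂ n × Matrix (Fin 3) (Fin 3) ℂ =>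
      (p.1, p.2.mulVec x) :=
    continuous_fst.prodMk (continuous_snd.matrix_mulVec continuous_const)
  simpa only [eval_substMat] using (continuous_eval_homogeneousSubmodule n).comp' this

lemma isClosed_setOf_eval_substMat_mul_eval (n : ℕ) :
    IsClosed {p : homogeneousSubmodule (Fin 3) ℂ n × Matrix (Fin 3) (Fin 3) ℂ |
      ∀ x z : Fin 3 → ℂ, eval x (substMat p.2 (p.1 : MvPolynomial (Fin 3) ℂ)) *
        eval z (p.1 : MvPolynomial (Fin 3) ℂ) =
          eval z (substMat p.2 (p.1 : MvPolynomial (Fin 3) ℂ)) *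
            eval x (p.1 : MvPolynomial (Fin 3) ℂ)} := by
  have continuous_eval_fst (x : Fin 3 → ℂ) :
      Continuous fun p : homogeneousSubmodule (Fin 3) ℂ n × Matrix (Fin 3) (Fin 3) ℂ =>
        eval x (p.1 : MvPolynomial (Fin 3) ℂ) := by
    have : Continuous fun p : homogeneousSubmodule (Fin 3) ℂ n × Matrix (Fin 3) (Fin 3) ℂ =>
        (p.1, x) := continuous_fst.prodMk continuous_const
    simpa only using (continuous_eval_homogeneousSubmodule n).comp' this
  simp only [Set.ofPred_forall]
  exact isClosed_iInter fun x => isClosed_iInter fun z =>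
    isClosed_eq ((continuous_eval_substMat n x).mul (continuous_eval_fst z))
      ((continuous_eval_substMat n z).mul (continuous_eval_fst x))

-- Semi-invariance is replaced by proportionality of values, a closed condition on `(Φ, A)`.
lemma eventually_forall_not_exists_substMat_eq_smul {K : Set (Matrix (Fin 3) (Fin 3) ℂ)}
    (hK : IsCompact K) {Φ₀ : homogeneousSubmodule (Fin 3) ℂ n}
    (hΦ₀ : (Φ₀ : MvPolynomial (Fin 3) ℂ) ≠ 0)
    (h : ∀ A ∈ K, ¬ ∃ c : ℂ, substMat A (Φ₀ : MvPolynomial (Fin 3) ℂ) = c • Φ₀.1) :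
    ∀ᶠ Φ : homogeneousSubmodule (Fin 3) ℂ n in 𝓝 Φ₀,
      ∀ A ∈ K, ¬ ∃ c : ℂ, substMat A (Φ : MvPolynomial (Fin 3) ℂ) = c • Φ.1 := by
  refine hK.eventually_forall_of_forall_eventually fun A hA => ?_
  filter_upwards [(isClosed_setOf_eval_substMat_mul_eval n).isOpen_compl.mem_nhds
    (x := (Φ₀, A)) fun hmem => h A hA (exists_eq_smul_of_eval_mul_eval hΦ₀ hmem)]
  rintro p hp ⟨c, hc⟩
  refine hp fun x z => ?_
  rw [hc, smul_eval, smul_eval]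
  ring

end Openness

section TrivialStabilizer

open Topology

variable {n : ℕ}

lemma linearStabilizer_le_center (hn : 4 ≤ n) {Φ : homogeneousSubmodule (Fin 3) ℂ n}
    (hs : SmoothCurve (Φ : MvPolynomial (Fin 3) ℂ))
    (hΦ : ¬ IsDegenerate n (Φ : MvPolynomial (Fin 3) ℂ)) :
    linearStabilizer (Φ : MvPolynomial (Fin 3) ℂ) ≤ Subgroup.center (GL (Fin 3) ℂ) := by
  intro g hg
  obtain ⟨B, hB⟩ := hs.exists_eventually_hasGradientBound (by omega)
  obtain ⟨P, D, hP, hD⟩ := exists_diagonalization_of_conditionNumber_pow_le fun k =>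
    hB.self_of_nhds.conditionNumber_le (by omega) (pow_mem hg k)
  obtain ⟨c, -, hc⟩ := hg
  have hD_const : ∀ i j, D i = D j := by
    by_contra! hne
    exact hΦ (isDegenerate_of_diagonalization hn hP g.det_ne_zero hD hc hne)
  rw [Matrix.GeneralLinearGroup.mem_center_iff_val_mem_range_scalar]
  have hD_scalar : Matrix.diagonal D = Matrix.scalar (Fin 3) (D 0) := by
    rw [Matrix.scalar_apply]
    exact congrArg _ (funext fun i => hD_const i 0)
  rw [hD_scalar, ← (Matrix.scalar_commute _ (Commute.all _) P).eq] at hD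
  exact ⟨D 0, (((Matrix.isUnit_iff_isUnit_det P).mpr hP.isUnit).mul_right_cancel hD).symm⟩

lemma isOpen_setOf_smoothCurve_and_linearStabilizer_le_center (hn : 3 ≤ n) :
    IsOpen {Φ : homogeneousSubmodule (Fin 3) ℂ n | SmoothCurve (Φ : MvPolynomial (Fin 3) ℂ) ∧
      linearStabilizer (Φ : MvPolynomial (Fin 3) ℂ) ≤ Subgroup.center (GL (Fin 3) ℂ)} := by
  rw [isOpen_iff_mem_nhds]
  rintro Φ₀ ⟨smooth, trivial_stabilizer⟩
  obtain ⟨B, hB⟩ := smooth.exists_eventually_hasGradientBound (by omega)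
  obtain ⟨K, hK, noncentral, exists_pow_mem⟩ := exists_isCompact_noncentral (Fin 3) (9 * B ^ 4)
  have hΦ₀ : (Φ₀ : MvPolynomial (Fin 3) ℂ) ≠ 0 := fun h₀ => by
    simpa using smooth 1 fun i => by rw [h₀, map_zero, map_zero]
  have not_semiinvariant :
      ∀ A ∈ K, ¬ ∃ c : ℂ, substMat A (Φ₀ : MvPolynomial (Fin 3) ℂ) = c • Φ₀.1 := by
    rintro A hA ⟨c, hc⟩
    obtain ⟨g, rfl, hg⟩ := noncentral A hA
    refine hg (trivial_stabilizer ⟨c, fun hc₀ => hΦ₀ ?_, hc⟩)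
    rw [hc₀, zero_smul] at hc
    exact substMat_injective g.det_ne_zero (hc.trans (map_zero _).symm)
  filter_upwards [hB, eventually_forall_not_exists_substMat_eq_smul hK hΦ₀ not_semiinvariant]
    with Φ bound hΦ
  refine ⟨bound.smoothCurve, fun g hg => ?_⟩
  by_contra hg'
  obtain ⟨k, ρ, hk⟩ := exists_pow_mem g hg' fun k =>
    bound.conditionNumber_le hn (pow_mem hg k)
  obtain ⟨c, -, hc⟩ := pow_mem hg k
  exact hΦ _ hk ⟨ρ ^ n * c, by rw [substMat_smul_of_isHomogeneous Φ.2, hc, smul_smul]⟩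

lemma dense_setOf_smoothCurve_and_linearStabilizer_le_center (hn : 4 ≤ n) :
    Dense {Φ : homogeneousSubmodule (Fin 3) ℂ n | SmoothCurve (Φ : MvPolynomial (Fin 3) ℂ) ∧
      linearStabilizer (Φ : MvPolynomial (Fin 3) ℂ) ≤ Subgroup.center (GL (Fin 3) ℂ)} := by
  refine dense_of_forall_not_isDegenerate fun Φ hΦ => ?_
  have smooth : SmoothCurve (Φ : MvPolynomial (Fin 3) ℂ) := by
    by_contra singular
    exact hΦ (isDegenerate_of_not_smoothCurve (by omega) Φ.2 singular)
  exact ⟨smooth, linearStabilizer_le_center hn smooth hΦ⟩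

end TrivialStabilizer

/-- **Statement 16.** For `n ≥ 4`, a generic plane curve of degree `n` over `ℂ` has no
projective automorphism except the identity: inside the space of all homogeneous degree-`n`
polynomials in three variables (topologized by coefficients) there is an open dense subset
consisting of polynomials which define smooth curves whose stabilizer in `PGL₃(ℂ)` is
trivial. -/
theorem generic_curve_trivial_automorphisms (n : ℕ) (hn : 4 ≤ n) :
    ∃ W : Set ↥(homogeneousSubmodule (Fin 3) ℂ n), IsOpen W ∧ Dense W ∧
      ∀ Φ ∈ W, SmoothCurve (Φ : MvPolynomial (Fin 3) ℂ) ∧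
        ∀ g : PGL3, ProjStab (Φ : MvPolynomial (Fin 3) ℂ) g → g = 1 := by
  refine ⟨{Φ | SmoothCurve (Φ : MvPolynomial (Fin 3) ℂ) ∧
    linearStabilizer (Φ : MvPolynomial (Fin 3) ℂ) ≤ Subgroup.center (GL (Fin 3) ℂ)},
    isOpen_setOf_smoothCurve_and_linearStabilizer_le_center (by omega),
    dense_setOf_smoothCurve_and_linearStabilizer_le_center hn, ?_⟩
  rintro Φ ⟨smooth, trivial_stabilizer⟩
  refine ⟨smooth, ?_⟩
  rintro _ ⟨g, rfl, hg⟩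
  exact (QuotientGroup.eq_one_iff g).mpr (trivial_stabilizer hg)
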